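/- Let a : ℕ → ℂ be a sequence with ∑_{n=0}^∞ |a(n)|² < ∞. Then ∑_{n=0}^∞ (1/(n+1)) · | ∑_{j=0}^{n} a(j) · a(n−j) |² ≤ ( ∑_{n=0}^∞ |a(n)|² )², where in particular the series on the left converges. -/

import Mathlib

open Real Finset

theorem norm_sum_sq_le_card_mul_sum_norm_sq {ι E : Type*} [SeminormedAddCommGroup E]
    (s : Finset ι) (f : ι → E) : ‖∑ i ∈ s, f i‖ ^ 2 ≤ #s * ∑ i ∈ s, ‖f i‖ ^ 2 :=
  calc ‖∑ i ∈ s, f i‖ ^ 2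
      ≤ (∑ i ∈ s, ‖f i‖) ^ 2 := by gcongr; exact norm_sum_le s f
    _ ≤ #s * ∑ i ∈ s, ‖f i‖ ^ 2 := sq_sum_le_card_mul_sum_sq

section CauchyProduct

variable {R : Type*} [NonUnitalSeminormedRing R]

theorem one_div_mul_norm_sum_range_mul_sq_le (a b : ℕ → R) (n : ℕ) :
    (1 / ((n : ℝ) + 1)) * ‖∑ j ∈ range (n + 1), a j * b (n - j)‖ ^ 2
      ≤ ∑ j ∈ range (n + 1), ‖a j‖ ^ 2 * ‖b (n - j)‖ ^ 2 := by
  rw [one_div, inv_mul_le_iff₀ n.cast_add_one_pos]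
  calc ‖∑ j ∈ range (n + 1), a j * b (n - j)‖ ^ 2
      ≤ ((n : ℝ) + 1) * ∑ j ∈ range (n + 1), ‖a j * b (n - j)‖ ^ 2 := by
        simpa only [card_range, Nat.cast_add_one] using
          norm_sum_sq_le_card_mul_sum_norm_sq (range (n + 1)) fun j => a j * b (n - j)
    _ ≤ ((n : ℝ) + 1) * ∑ j ∈ range (n + 1), ‖a j‖ ^ 2 * ‖b (n - j)‖ ^ 2 := by
        gcongr with j
        rw [← mul_pow]
        gcongr
        exact norm_mul_le _ _

theorem stmt_13_general (a b : ℕ → R) (ha : Summable fun n => ‖a n‖ ^ 2)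
    (hb : Summable fun n => ‖b n‖ ^ 2) :
    Summable (fun n : ℕ =>
      (1 / ((n : ℝ) + 1)) * ‖∑ j ∈ range (n + 1), a j * b (n - j)‖ ^ 2) ∧
    ∑' n : ℕ, (1 / ((n : ℝ) + 1)) * ‖∑ j ∈ range (n + 1), a j * b (n - j)‖ ^ 2
      ≤ (∑' n : ℕ, ‖a n‖ ^ 2) * ∑' n : ℕ, ‖b n‖ ^ 2 := by
  have cauchy_product : HasSum (fun n => ∑ j ∈ range (n + 1), ‖a j‖ ^ 2 * ‖b (n - j)‖ ^ 2)
      ((∑' n, ‖a n‖ ^ 2) * ∑' n, ‖b n‖ ^ 2) :=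
    hasSum_sum_range_mul_of_summable_norm (f := fun n => ‖a n‖ ^ 2) (g := fun n => ‖b n‖ ^ 2)
      ha.norm hb.norm
  have summable_left : Summable fun n : ℕ =>
      (1 / ((n : ℝ) + 1)) * ‖∑ j ∈ range (n + 1), a j * b (n - j)‖ ^ 2 :=
    cauchy_product.summable.of_nonneg_of_le (fun n => by positivity)
      (one_div_mul_norm_sum_range_mul_sq_le a b)
  exact ⟨summable_left,
    hasSum_le (one_div_mul_norm_sum_range_mul_sq_le a b) summable_left.hasSum cauchy_product⟩

end CauchyProduct

/-- Coefficient form of the case `p = 2` of the sharp Hardy–Littlewood embedding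
`H²(𝔻) ↪ A⁴(𝔻)`: if `∑ |a n|² < ∞` then
`∑ (1/(n+1)) |∑_{j≤n} a j · a (n−j)|² ≤ (∑ |a n|²)²`, the left series being convergent. -/
theorem stmt_13 (a : ℕ → ℂ) (ha : Summable fun n => ‖a n‖ ^ 2) :
    Summable (fun n : ℕ =>
      (1 / ((n : ℝ) + 1)) * ‖∑ j ∈ Finset.range (n + 1), a j * a (n - j)‖ ^ 2) ∧
    ∑' n : ℕ, (1 / ((n : ℝ) + 1)) * ‖∑ j ∈ Finset.range (n + 1), a j * a (n - j)‖ ^ 2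
      ≤ (∑' n : ℕ, ‖a n‖ ^ 2) ^ 2 := by
  rw [sq (∑' n : ℕ, ‖a n‖ ^ 2)]
  exact stmt_13_general a a ha ha
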